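/- Let f be a smooth nowhere-vanishing real function of one variable such that x·f′(x)/f(x) is non-constant, and let M be a nonempty connected open subset of {(x,y) ∈ ℝ² : x·f′(x)/f(x) ≠ 1/2, x ≠ 0} on which x·f′(x)/f(x) is non-constant. Define metrics h and h̃ on M by their inverse matrices h⁻¹(x,y) = [[0, x],[x, y]] and h̃⁻¹(x,y) = [[0, f(x)],[f(x), f(x)]] (in the coordinates (x,y)), and let E = x·∂_x + y·∂_y. Then: (i) (h, h̃) is a compatible pair of metrics on M and the triple (h, h̃, E) is regular; (ii) L_E h = h and L_E h̃ = (2 − x·f′/f)·h̃; (iii) the associated multiplication • on 1-forms satisfies dx•dx = 0, dx•dy = dx, and dy•dy = dy; and (iv) L_E(•) = (1 − x·f′/f)·• on tangent vectors. In particular, E rescales the multiplication • even though D̃ − D = 1 − x·f′/f is non-constant, so the conclusion of the two-metric rescaling theorem (valid in dimension at least three) fails in dimension two. -/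

import Mathlib

open scoped BigOperators

noncomputable section

/-- Points of ℝⁿ. -/
abbrev Pt (n : ℕ) := Fin n → ℝ
/-- Vector fields (globally defined functions; conditions are imposed on an open set). -/
abbrev VF (n : ℕ) := Pt n → Fin n → ℝ
/-- 1-forms. -/
abbrev OneForm (n : ℕ) := Pt n → Fin n → ℝ
/-- Metrics: smooth maps into symmetric invertible matrices. -/
abbrev Met (n : ℕ) := Pt n → Matrix (Fin n) (Fin n) ℝ
/-- (1,2)-tensor fields (multiplications on tangent vectors): components `c t k i j` = c^k_{ij}(t). -/
abbrev Mul2 (n : ℕ) := Pt n → Fin n → Fin n → Fin n → ℝ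

variable {n : ℕ}

/-- Partial derivative ∂ᵢ f (t). -/
def pder (i : Fin n) (f : Pt n → ℝ) (t : Pt n) : ℝ :=
  fderiv ℝ f t (Pi.single i 1)

/-- Smoothness (on `U`) of a vector field or a 1-form. -/
def SmoothVF (U : Set (Pt n)) (X : VF n) : Prop :=
  ∀ k, ContDiffOn ℝ (⊤ : ℕ∞) (fun t => X t k) U

def SmoothMet (U : Set (Pt n)) (g : Met n) : Prop :=
  ∀ i j, ContDiffOn ℝ (⊤ : ℕ∞) (fun t => g t i j) U

def SmoothMul2 (U : Set (Pt n)) (c : Mul2 n) : Prop :=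
  ∀ k i j, ContDiffOn ℝ (⊤ : ℕ∞) (fun t => c t k i j) U

/-- `g` is a (pseudo-Riemannian) metric on `U`: smooth, symmetric, invertible. -/
def IsMetricOn (U : Set (Pt n)) (g : Met n) : Prop :=
  SmoothMet U g ∧ ∀ t ∈ U, (g t).IsSymm ∧ IsUnit (g t)

/-- The 1-form g(X). -/
def mdown (g : Met n) (X : VF n) : OneForm n := fun t k => ∑ j, g t k j * X t j
/-- The vector field g*α. -/
def mup (g : Met n) (α : OneForm n) : VF n := fun t k => ∑ j, (g t)⁻¹ k j * α t j
/-- g*(α, β). -/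
def mup2 (g : Met n) (α β : OneForm n) (t : Pt n) : ℝ :=
  ∑ i, ∑ j, (g t)⁻¹ i j * α t i * β t j
/-- g(X, Y). -/
def mdown2 (g : Met n) (X Y : VF n) (t : Pt n) : ℝ :=
  ∑ i, ∑ j, g t i j * X t i * Y t j

/-- Christoffel symbols Γ(g)^k_{ij}(t). -/
def chr (g : Met n) (k i j : Fin n) (t : Pt n) : ℝ :=
  (1/2) * ∑ l, (g t)⁻¹ k l *
    (pder i (fun s => g s j l) t + pder j (fun s => g s i l) t - pder l (fun s => g s i j) t)

/-- Levi-Civita covariant derivative ∇^g_X Y of a vector field. -/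
def covV (g : Met n) (X Y : VF n) : VF n :=
  fun t k => ∑ i, X t i * (pder i (fun s => Y s k) t + ∑ m, chr g k i m t * Y t m)

/-- Levi-Civita covariant derivative ∇^g_X α of a 1-form. -/
def covF (g : Met n) (X : VF n) (α : OneForm n) : OneForm n :=
  fun t k => ∑ i, X t i * (pder i (fun s => α s k) t - ∑ m, chr g m i k t * α t m)

/-- Lie bracket [X, Y]. -/
def vbr (X Y : VF n) : VF n :=
  fun t k => ∑ i, (X t i * pder i (fun s => Y s k) t - Y t i * pder i (fun s => X s k) t)

/-- Curvature R(g)_{X,Y} Z = ∇_X ∇_Y Z − ∇_Y ∇_X Z − ∇_{[X,Y]} Z. -/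
def curvV (g : Met n) (X Y Z : VF n) : VF n :=
  fun t k => covV g X (covV g Y Z) t k - covV g Y (covV g X Z) t k
    - covV g (vbr X Y) Z t k

/-- Curvature acting on 1-forms: (R(g)_{X,Y} α)(Z) = −α(R(g)_{X,Y} Z). -/
def curvF (g : Met n) (X Y : VF n) (α : OneForm n) : OneForm n :=
  fun t k => - ∑ m, α t m * curvV g X Y (fun _ => Pi.single k 1) t m

/-- `g` is flat on `U`: the curvature tensor vanishes identically. -/
def FlatOn (U : Set (Pt n)) (g : Met n) : Prop :=
  ∀ X Y Z : VF n, SmoothVF U X → SmoothVF U Y → SmoothVF U Z →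
    ∀ t ∈ U, ∀ k, curvV g X Y Z t k = 0

/-- `g` has constant sectional curvature `s` on `U`. -/
def ConstSecCurv (U : Set (Pt n)) (g : Met n) (s : ℝ) : Prop :=
  ∀ X Y : VF n, SmoothVF U X → SmoothVF U Y → ∀ t ∈ U,
    mdown2 g (curvV g X Y Y) X t
      = s * (mdown2 g X X t * mdown2 g Y Y t - (mdown2 g X Y t) ^ 2)

/-- The metric g_λ of the pencil: its inverse matrix is g⁻¹ + λ g̃⁻¹. -/
def pencil (g g' : Met n) (lam : ℝ) : Met n :=
  fun t => ((g t)⁻¹ + lam • (g' t)⁻¹)⁻¹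

/-- Almost compatibility of the pair (g, g̃) on `U`. -/
def AlmostCompatible (U : Set (Pt n)) (g g' : Met n) : Prop :=
  ∀ lam : ℝ, (∀ t ∈ U, IsUnit ((g t)⁻¹ + lam • (g' t)⁻¹)) →
    ∀ X : VF n, SmoothVF U X → ∀ α : OneForm n, SmoothVF U α →
      ∀ t ∈ U, ∀ k,
        mup (pencil g g' lam) (covF (pencil g g' lam) X α) t k
          = mup g (covF g X α) t k + lam * mup g' (covF g' X α) t k

/-- Compatibility of the pair (g, g̃) on `U`. -/
def Compatible (U : Set (Pt n)) (g g' : Met n) : Prop :=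
  AlmostCompatible U g g' ∧
  ∀ lam : ℝ, (∀ t ∈ U, IsUnit ((g t)⁻¹ + lam • (g' t)⁻¹)) →
    ∀ X Y : VF n, SmoothVF U X → SmoothVF U Y →
      ∀ α : OneForm n, SmoothVF U α →
        ∀ t ∈ U, ∀ k,
          mup (pencil g g' lam) (curvF (pencil g g' lam) X Y α) t k
            = mup g (curvF g X Y α) t k + lam * mup g' (curvF g' X Y α) t k

/-- The multiplication α ∘ β = ∇^g_{g*α} β − ∇^{g̃}_{g*α} β on 1-forms. -/
def circM (g g' : Met n) (α β : OneForm n) : OneForm n :=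
  fun t k => covF g (mup g α) β t k - covF g' (mup g α) β t k

/-- The endomorphism T(u) = g(E) ∘ u of 1-forms, as a pointwise matrix
(`∘` being tensorial in its second argument). -/
def Tmat (g g' : Met n) (E : VF n) (t : Pt n) : Matrix (Fin n) (Fin n) ℝ :=
  Matrix.of fun k m => circM g g' (mdown g E) (fun _ => Pi.single m 1) t k

/-- The triple (g, g̃, E) is regular on `U` if T is invertible at every point. -/
def RegularTriple (U : Set (Pt n)) (g g' : Met n) (E : VF n) : Prop :=
  ∀ t ∈ U, IsUnit (Tmat g g' E t)

/-- T⁻¹(v). -/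
def TinvF (g g' : Met n) (E : VF n) (v : OneForm n) : OneForm n :=
  fun t k => ∑ m, (Tmat g g' E t)⁻¹ k m * v t m

/-- The multiplication u • v = u ∘ T⁻¹(v) on 1-forms. -/
def bulF (g g' : Met n) (E : VF n) (u v : OneForm n) : OneForm n :=
  circM g g' u (TinvF g g' E v)

/-- The multiplication • on vector fields: X • Y = g̃*((g̃X) • (g̃Y)). -/
def bulV (g g' : Met n) (E : VF n) (X Y : VF n) : VF n :=
  mup g' (bulF g g' E (mdown g' X) (mdown g' Y))

/-- The multiplication • associated to the regular triple (g, g̃, E), as a (1,2)-tensor. -/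
def bulMul (g g' : Met n) (E : VF n) : Mul2 n :=
  fun t k i j => bulV g g' E (fun _ => Pi.single i 1) (fun _ => Pi.single j 1) t k

/-- Applying a (1,2)-tensor to vector fields. -/
def mapp (c : Mul2 n) (X Y : VF n) : VF n :=
  fun t k => ∑ i, ∑ j, c t k i j * X t i * Y t j

/-- Transporting a multiplication on tangent vectors to a multiplication
on 1-forms via the metric: u • v := g̃((g̃*u) • (g̃*v)). -/
def formMul (g' : Met n) (c : Mul2 n) (u v : OneForm n) : OneForm n :=
  mdown g' (mapp c (mup g' u) (mup g' v))

/-- Lie derivative of a function. -/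
def lieFun (E : VF n) (φ : Pt n → ℝ) : Pt n → ℝ :=
  fun t => ∑ i, E t i * pder i φ t

/-- Lie derivative of a 1-form: (L_E α)(X) = E(α(X)) − α([E,X]). -/
def lieOne (E : VF n) (α : OneForm n) : OneForm n :=
  fun t k => (∑ i, E t i * pder i (fun s => α s k) t) + ∑ i, α t i * pder k (fun s => E s i) t

/-- Lie derivative of a metric: (L_E g)(X,Y) = E(g(X,Y)) − g([E,X],Y) − g(X,[E,Y]). -/
def lieMet (E : VF n) (g : Met n) : Met n := fun t =>
  Matrix.of fun k j =>
    (∑ i, E t i * pder i (fun s => g s k j) t)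
    + (∑ i, g t i j * pder k (fun s => E s i) t)
    + (∑ i, g t k i * pder j (fun s => E s i) t)

/-- Lie derivative of a multiplication ((1,2)-tensor):
(L_E c)(u,v) = L_E(c(u,v)) − c(L_E u, v) − c(u, L_E v), componentwise. -/
def lieMul (E : VF n) (c : Mul2 n) : Mul2 n :=
  fun t k i j =>
    vbr E (mapp c (fun _ => Pi.single i 1) (fun _ => Pi.single j 1)) t k
    - mapp c (vbr E (fun _ => Pi.single i 1)) (fun _ => Pi.single j 1) t k
    - mapp c (fun _ => Pi.single i 1) (vbr E (fun _ => Pi.single j 1)) t k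

/-- Lie derivative of a multiplication on 1-forms (applied to the pencil multiplication ∘). -/
def lieCirc (E : VF n) (g g' : Met n) (u v : OneForm n) : OneForm n :=
  fun t k => lieOne E (circM g g' u v) t k - circM g g' (lieOne E u) v t k
    - circM g g' u (lieOne E v) t k

/-- ∇^g_X(•)(Y,Z) := ∇^g_X(Y•Z) − (∇^g_X Y)•Z − Y•(∇^g_X Z), for a multiplication c. -/
def covMul (g : Met n) (c : Mul2 n) (X Y Z : VF n) : VF n :=
  fun t k => covV g X (mapp c Y Z) t k - mapp c (covV g X Y) Z t k
    - mapp c Y (covV g X Z) t k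

/-- The (4,0)-tensor ∇^g(•)(X,Y,Z,V) := g(∇^g_X(•)(Y,Z), V). -/
def covMul4 (g : Met n) (c : Mul2 n) (X Y Z V : VF n) (t : Pt n) : ℝ :=
  mdown2 g (covMul g c X Y Z) V t

/-- Total symmetry of the (4,0)-tensor ∇^g(•) (the F-manifold condition). -/
def TotSym (U : Set (Pt n)) (g : Met n) (c : Mul2 n) : Prop :=
  ∀ X Y Z V : VF n, SmoothVF U X → SmoothVF U Y → SmoothVF U Z → SmoothVF U V →
    ∀ t ∈ U,
      covMul4 g c X Y Z V t = covMul4 g c Y X Z V t ∧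
      covMul4 g c X Y Z V t = covMul4 g c X Z Y V t ∧
      covMul4 g c X Y Z V t = covMul4 g c X Y V Z t

/-- Weak F-manifold structure (U, •, g̃, E), with identity `e`, •-inverse `Einv` of E,
and rescaling functions `Dt` (for the metric) and `k` (for the multiplication). -/
structure IsWeakF (U : Set (Pt n)) (c : Mul2 n) (g' : Met n) (E e Einv : VF n)
    (Dt k : Pt n → ℝ) : Prop where
  met : IsMetricOn U g'
  smooth_c : SmoothMul2 U c
  smooth_E : SmoothVF U E
  smooth_e : SmoothVF U e
  smooth_Einv : SmoothVF U Einv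
  smooth_Dt : ContDiffOn ℝ (⊤ : ℕ∞) Dt U
  smooth_k : ContDiffOn ℝ (⊤ : ℕ∞) k U
  comm : ∀ t ∈ U, ∀ a i j, c t a i j = c t a j i
  assoc : ∀ t ∈ U, ∀ a x y z, (∑ m, c t a m z * c t m x y) = ∑ m, c t a x m * c t m y z
  unit : ∀ t ∈ U, ∀ a i, (∑ j, c t a j i * e t j) = if a = i then (1 : ℝ) else 0
  invar : ∀ t ∈ U, ∀ x y z, (∑ m, g' t m z * c t m x y) = ∑ m, g' t x m * c t m y z
  lie_g : ∀ t ∈ U, ∀ i j, lieMet E g' t i j = Dt t * g' t i j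
  lie_c : ∀ t ∈ U, ∀ a i j, lieMul E c t a i j = k t * c t a i j
  e_inv : ∀ t ∈ U, ∀ a, (∑ i, ∑ j, c t a i j * E t i * Einv t j) = e t a
  sym_E : ∀ Y Z V : VF n, SmoothVF U Y → SmoothVF U Z → SmoothVF U V → ∀ t ∈ U,
    covMul4 g' c E Y Z V t = covMul4 g' c Y E Z V t

/-- Weak quasi-homogeneous pencil (h, h̃) with Euler vector field E. -/
structure IsWQH (U : Set (Pt n)) (h h' : Met n) (E : VF n) (D Dt : Pt n → ℝ) : Prop where
  met_h : IsMetricOn U h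
  met_h' : IsMetricOn U h'
  compat : Compatible U h h'
  smooth_E : SmoothVF U E
  smooth_D : ContDiffOn ℝ (⊤ : ℕ∞) D U
  smooth_Dt : ContDiffOn ℝ (⊤ : ℕ∞) Dt U
  lie_h' : ∀ t ∈ U, ∀ i j, lieMet E h' t i j = Dt t * h' t i j
  cov_E : ∀ X : VF n, SmoothVF U X → ∀ t ∈ U, ∀ a, covV h X E t a = (D t / 2) * X t a
  diff_const : ∃ c₀ : ℝ, ∀ t ∈ U, Dt t - D t = c₀

/-- Frobenius manifold structure (U, •, g̃, E). -/
structure IsFrob (U : Set (Pt n)) (c : Mul2 n) (g' : Met n) (E e : VF n) (D k : ℝ) : Prop where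
  met : IsMetricOn U g'
  flat : FlatOn U g'
  smooth_c : SmoothMul2 U c
  smooth_E : SmoothVF U E
  smooth_e : SmoothVF U e
  comm : ∀ t ∈ U, ∀ a i j, c t a i j = c t a j i
  assoc : ∀ t ∈ U, ∀ a x y z, (∑ m, c t a m z * c t m x y) = ∑ m, c t a x m * c t m y z
  unit : ∀ t ∈ U, ∀ a i, (∑ j, c t a j i * e t j) = if a = i then (1 : ℝ) else 0
  invar : ∀ t ∈ U, ∀ x y z, (∑ m, g' t m z * c t m x y) = ∑ m, g' t x m * c t m y z
  e_par : ∀ X : VF n, SmoothVF U X → ∀ t ∈ U, ∀ a, covV g' X e t a = 0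
  tot_sym : TotSym U g' c
  nabla2E : ∀ X Y : VF n, SmoothVF U X → SmoothVF U Y → ∀ t ∈ U, ∀ a,
    covV g' X (covV g' Y E) t a - covV g' (covV g' X Y) E t a = 0
  lie_g : ∀ t ∈ U, ∀ i j, lieMet E g' t i j = D * g' t i j
  lie_c : ∀ t ∈ U, ∀ a i j, lieMul E c t a i j = k * c t a i j

/-- The intersection metric `g` of a Frobenius manifold: g*g̃ = E•, together with
its standard properties. -/
structure IsIntersection (U : Set (Pt n)) (c : Mul2 n) (g g' : Met n) (E : VF n)
    (d : ℝ) : Prop where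
  met : IsMetricOn U g
  defn : ∀ t ∈ U, ∀ a j, (∑ l, (g t)⁻¹ a l * g' t l j) = ∑ i, c t a i j * E t i
  lie_g : ∀ t ∈ U, ∀ i j, lieMet E g t i j = (1 - d) * g t i j
  compat : Compatible U g g'
  regular : RegularTriple U g g' E
  mul_eq : ∀ t ∈ U, ∀ a i j, bulMul g g' E t a i j = c t a i j

section AffineMetrics

theorem pder_congr {F G : Pt n → ℝ} {M : Set (Pt n)} (hM : IsOpen M) (hFG : ∀ s ∈ M, F s = G s)
    {t : Pt n} (ht : t ∈ M) (i : Fin n) : pder i F t = pder i G t := by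
  have : F =ᶠ[nhds t] G := Filter.eventually_of_mem (hM.mem_nhds ht) hFG
  rw [pder, pder, this.fderiv_eq]

theorem pder_const (i : Fin n) (c : ℝ) (t : Pt n) : pder i (fun _ => c) t = 0 := by
  simp [pder]

theorem pder_coord (i j : Fin n) (t : Pt n) :
    pder i (fun s => s j) t = if j = i then 1 else 0 := by
  have : HasFDerivAt (fun s : Pt n => s j) (ContinuousLinearMap.proj (R := ℝ) j) t :=
    (ContinuousLinearMap.proj (R := ℝ) (φ := fun _ : Fin n => ℝ) j).hasFDerivAt
  rw [pder, this.fderiv]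
  simp [Pi.single_apply]

theorem pder_mul {i : Fin n} {F G : Pt n → ℝ} {t : Pt n} (hF : DifferentiableAt ℝ F t)
    (hG : DifferentiableAt ℝ G t) :
    pder i (fun s => F s * G s) t = pder i F t * G t + F t * pder i G t := by
  rw [pder, fderiv_fun_mul hF hG]
  simp [pder]
  ring

theorem pder_sum {ι : Type*} (u : Finset ι) {i : Fin n} {F : ι → Pt n → ℝ} {t : Pt n}
    (hF : ∀ j ∈ u, DifferentiableAt ℝ (F j) t) :
    pder i (fun s => ∑ j ∈ u, F j s) t = ∑ j ∈ u, pder i (F j) t := by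
  rw [pder, fderiv_fun_sum hF]
  simp [pder]

/-- A function of two variables that is affine in the second one. -/
theorem hasFDerivAt_affine {a b : ℝ → ℝ} {a' b' : ℝ} {t : Pt 2}
    (ha : HasDerivAt a a' (t 0)) (hb : HasDerivAt b b' (t 0)) :
    HasFDerivAt (fun s : Pt 2 => a (s 0) * s 1 + b (s 0))
      ((a' * t 1 + b') • ContinuousLinearMap.proj (R := ℝ) (0 : Fin 2)
        + a (t 0) • ContinuousLinearMap.proj (R := ℝ) (1 : Fin 2)) t := by
  have h0 : HasFDerivAt (fun s : Pt 2 => s 0) (ContinuousLinearMap.proj (R := ℝ) (0 : Fin 2)) t :=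
    (ContinuousLinearMap.proj (R := ℝ) (φ := fun _ : Fin 2 => ℝ) 0).hasFDerivAt
  have h1 : HasFDerivAt (fun s : Pt 2 => s 1) (ContinuousLinearMap.proj (R := ℝ) (1 : Fin 2)) t :=
    (ContinuousLinearMap.proj (R := ℝ) (φ := fun _ : Fin 2 => ℝ) 1).hasFDerivAt
  have hA := ha.comp_hasFDerivAt t h0
  have hB := hb.comp_hasFDerivAt t h0
  refine ((hA.mul h1).add hB).congr_fderiv ?_
  ext v
  simp
  ring

theorem pder_zero_affine {M : Set (Pt 2)} (hM : IsOpen M) {F : Pt 2 → ℝ} {a b : ℝ → ℝ}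
    {a' b' : ℝ} {t : Pt 2} (ht : t ∈ M) (hF : ∀ s ∈ M, F s = a (s 0) * s 1 + b (s 0))
    (ha : HasDerivAt a a' (t 0)) (hb : HasDerivAt b b' (t 0)) :
    pder 0 F t = a' * t 1 + b' := by
  rw [pder_congr hM hF ht, pder, (hasFDerivAt_affine ha hb).fderiv]
  simp

theorem pder_one_affine {M : Set (Pt 2)} (hM : IsOpen M) {F : Pt 2 → ℝ} {a b : ℝ → ℝ}
    {a' b' : ℝ} {t : Pt 2} (ht : t ∈ M) (hF : ∀ s ∈ M, F s = a (s 0) * s 1 + b (s 0))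
    (ha : HasDerivAt a a' (t 0)) (hb : HasDerivAt b b' (t 0)) :
    pder 1 F t = a (t 0) := by
  rw [pder_congr hM hF ht, pder, (hasFDerivAt_affine ha hb).fderiv]
  simp

/-- On `M`, the metric `g` has inverse matrix `[[0, p(x)], [p(x), μ y + r(x)]]`. -/
structure IsAffineMet (M : Set (Pt 2)) (g : Met 2) (p : ℝ → ℝ) (μ : ℝ) (r : ℝ → ℝ) : Prop where
  isOpen : IsOpen M
  smooth_p : ContDiff ℝ (⊤ : ℕ∞) p
  smooth_r : ContDiff ℝ (⊤ : ℕ∞) r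
  ne_zero : ∀ t ∈ M, p (t 0) ≠ 0
  eq_inv : ∀ t ∈ M, g t = (!![0, p (t 0); p (t 0), μ * t 1 + r (t 0)])⁻¹

theorem inv_antitriangular {p q : ℝ} (hp : p ≠ 0) :
    (!![0, p; p, q] : Matrix (Fin 2) (Fin 2) ℝ)⁻¹ = !![-q / p ^ 2, 1 / p; 1 / p, 0] := by
  apply Matrix.inv_eq_right_inv
  ext i j
  fin_cases i <;> fin_cases j <;> simp [Matrix.mul_apply, Fin.sum_univ_two] <;> field_simp <;> ring

theorem isUnit_antitriangular {p q : ℝ} :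
    IsUnit (!![0, p; p, q] : Matrix (Fin 2) (Fin 2) ℝ) ↔ p ≠ 0 := by
  simp [Matrix.isUnit_iff_isUnit_det, Matrix.det_fin_two_of]

namespace IsAffineMet

variable {M : Set (Pt 2)} {g : Met 2} {p r : ℝ → ℝ} {μ : ℝ}

theorem eq_expl (hg : IsAffineMet M g p μ r) {t : Pt 2} (ht : t ∈ M) :
    g t = !![-(μ * t 1 + r (t 0)) / p (t 0) ^ 2, 1 / p (t 0); 1 / p (t 0), 0] := by
  rw [hg.eq_inv t ht, inv_antitriangular (hg.ne_zero t ht)]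

theorem inv_eq (hg : IsAffineMet M g p μ r) {t : Pt 2} (ht : t ∈ M) :
    (g t)⁻¹ = !![0, p (t 0); p (t 0), μ * t 1 + r (t 0)] := by
  rw [hg.eq_inv t ht, Matrix.nonsing_inv_nonsing_inv]
  exact (Matrix.isUnit_iff_isUnit_det _).1 (isUnit_antitriangular.2 (hg.ne_zero t ht))

theorem hasDerivAt_p (hg : IsAffineMet M g p μ r) (x : ℝ) : HasDerivAt p (deriv p x) x :=
  (hg.smooth_p.differentiable (by simp) x).hasDerivAt

theorem hasDerivAt_r (hg : IsAffineMet M g p μ r) (x : ℝ) : HasDerivAt r (deriv r x) x :=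
  (hg.smooth_r.differentiable (by simp) x).hasDerivAt

theorem isMetricOn (hg : IsAffineMet M g p μ r) : IsMetricOn M g := by
  have h0 : ContDiff ℝ (⊤ : ℕ∞) (fun t : Pt 2 => t 0) := contDiff_apply ℝ ℝ 0
  have h1 : ContDiff ℝ (⊤ : ℕ∞) (fun t : Pt 2 => t 1) := contDiff_apply ℝ ℝ 1
  have hp : ContDiff ℝ (⊤ : ℕ∞) (fun t : Pt 2 => p (t 0)) := hg.smooth_p.comp h0
  have hr : ContDiff ℝ (⊤ : ℕ∞) (fun t : Pt 2 => r (t 0)) := hg.smooth_r.comp h0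
  refine ⟨fun i j => ?_, fun t ht => ⟨?_, ?_⟩⟩
  · refine ContDiffOn.congr (f := fun t : Pt 2 =>
      !![-(μ * t 1 + r (t 0)) / p (t 0) ^ 2, 1 / p (t 0); 1 / p (t 0), 0] i j) ?_
      fun t ht => by rw [hg.eq_expl ht]
    have hinv : ContDiffOn ℝ (⊤ : ℕ∞) (fun t : Pt 2 => 1 / p (t 0)) M :=
      contDiffOn_const.div hp.contDiffOn hg.ne_zero
    fin_cases i <;> fin_cases j
    · exact ((contDiff_const.mul h1).add hr).neg.contDiffOn.div (hp.pow 2).contDiffOn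
        fun t ht => pow_ne_zero _ (hg.ne_zero t ht)
    · exact hinv
    · exact hinv
    · exact contDiffOn_const
  · rw [hg.eq_expl ht]
    ext i j
    fin_cases i <;> fin_cases j <;> rfl
  · rw [hg.eq_inv t ht, Matrix.isUnit_nonsing_inv_iff]
    exact isUnit_antitriangular.2 (hg.ne_zero t ht)

theorem pder_entry (hg : IsAffineMet M g p μ r) {t : Pt 2} (ht : t ∈ M) :
    (pder 0 (fun s => g s 0 0) t = -deriv r (t 0) / p (t 0) ^ 2
        + 2 * (μ * t 1 + r (t 0)) * deriv p (t 0) / p (t 0) ^ 3)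
    ∧ pder 1 (fun s => g s 0 0) t = -μ / p (t 0) ^ 2
    ∧ pder 0 (fun s => g s 0 1) t = -deriv p (t 0) / p (t 0) ^ 2
    ∧ pder 1 (fun s => g s 0 1) t = 0
    ∧ pder 0 (fun s => g s 1 0) t = -deriv p (t 0) / p (t 0) ^ 2
    ∧ pder 1 (fun s => g s 1 0) t = 0
    ∧ pder 0 (fun s => g s 1 1) t = 0
    ∧ pder 1 (fun s => g s 1 1) t = 0 := by
  have hp0 := hg.ne_zero t ht
  have hp2 : p (t 0) ^ 2 ≠ 0 := pow_ne_zero _ hp0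
  have hp := hg.hasDerivAt_p (t 0)
  have hr := hg.hasDerivAt_r (t 0)
  have ha := (hasDerivAt_const (t 0) (-μ)).fun_div (hp.fun_pow 2) hp2
  have hb := hr.fun_neg.fun_div (hp.fun_pow 2) hp2
  have hc := hp.fun_inv hp0
  have hz := hasDerivAt_const (t 0) (0 : ℝ)
  have e00 : ∀ s ∈ M, g s 0 0 = -μ / p (s 0) ^ 2 * s 1 + -r (s 0) / p (s 0) ^ 2 := by
    intro s hs
    rw [hg.eq_expl hs]
    simp
    ring
  have e01 : ∀ s ∈ M, g s 0 1 = 0 * s 1 + (p (s 0))⁻¹ := by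
    intro s hs
    rw [hg.eq_expl hs]
    simp
  have e10 : ∀ s ∈ M, g s 1 0 = 0 * s 1 + (p (s 0))⁻¹ := by
    intro s hs
    rw [hg.eq_expl hs]
    simp
  have e11 : ∀ s ∈ M, g s 1 1 = 0 * s 1 + 0 := by
    intro s hs
    rw [hg.eq_expl hs]
    simp
  refine ⟨?_, ?_, ?_, ?_, ?_, ?_, ?_, ?_⟩
  · rw [pder_zero_affine hg.isOpen ht e00 ha hb]
    field_simp
    ring
  · rw [pder_one_affine hg.isOpen ht e00 ha hb]
  · rw [pder_zero_affine hg.isOpen ht e01 hz hc]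
    ring
  · rw [pder_one_affine hg.isOpen ht e01 hz hc]
  · rw [pder_zero_affine hg.isOpen ht e10 hz hc]
    ring
  · rw [pder_one_affine hg.isOpen ht e10 hz hc]
  · rw [pder_zero_affine hg.isOpen ht e11 hz hz]
    ring
  · rw [pder_one_affine hg.isOpen ht e11 hz hz]

theorem chr_eq (hg : IsAffineMet M g p μ r) {t : Pt 2} (ht : t ∈ M) :
    (chr g 0 0 0 t = -deriv p (t 0) / p (t 0) + μ / (2 * p (t 0)))
    ∧ chr g 0 0 1 t = 0
    ∧ chr g 0 1 0 t = 0
    ∧ chr g 0 1 1 t = 0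
    ∧ chr g 1 0 0 t = -deriv r (t 0) / (2 * p (t 0))
        + μ * (μ * t 1 + r (t 0)) / (2 * p (t 0) ^ 2)
    ∧ chr g 1 0 1 t = -μ / (2 * p (t 0))
    ∧ chr g 1 1 0 t = -μ / (2 * p (t 0))
    ∧ chr g 1 1 1 t = 0 := by
  have hp0 := hg.ne_zero t ht
  obtain ⟨h1, h2, h3, h4, h5, h6, h7, h8⟩ := hg.pder_entry ht
  refine ⟨?_, ?_, ?_, ?_, ?_, ?_, ?_, ?_⟩ <;>
    simp only [chr, Fin.sum_univ_two, hg.inv_eq ht, h1, h2, h3, h4, h5, h6, h7, h8,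
      Matrix.of_apply, Matrix.cons_val_zero, Matrix.cons_val_one, Matrix.cons_val'] <;>
    field_simp <;> ring

theorem differentiableAt_chr_and_flat (hg : IsAffineMet M g p μ r) {t : Pt 2} (ht : t ∈ M) :
    (∀ k i j, DifferentiableAt ℝ (chr g k i j) t)
    ∧ ∀ k m i j, pder i (chr g m j k) t - pder j (chr g m i k) t
        + ∑ l, (chr g m i l t * chr g l j k t - chr g m j l t * chr g l i k t) = 0 := by
  have hp0 := hg.ne_zero t ht
  have h2p0 : 2 * p (t 0) ≠ 0 := mul_ne_zero two_ne_zero hp0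
  have h2p2 : 2 * p (t 0) ^ 2 ≠ 0 := mul_ne_zero two_ne_zero (pow_ne_zero _ hp0)
  have hp := hg.hasDerivAt_p (t 0)
  have hr := hg.hasDerivAt_r (t 0)
  have hp' : HasDerivAt (deriv p) (deriv (deriv p) (t 0)) (t 0) :=
    (((contDiff_infty_iff_deriv.1 hg.smooth_p).2).differentiable (by simp) _).hasDerivAt
  have hr' : HasDerivAt (deriv r) (deriv (deriv r) (t 0)) (t 0) :=
    (((contDiff_infty_iff_deriv.1 hg.smooth_r).2).differentiable (by simp) _).hasDerivAt
  have hz := hasDerivAt_const (t 0) (0 : ℝ)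
  have hC := (hasDerivAt_const (t 0) (-μ)).fun_div (hp.const_mul 2) h2p0
  have hA := (hp'.fun_neg.fun_div hp hp0).fun_add
    ((hasDerivAt_const (t 0) μ).fun_div (hp.const_mul 2) h2p0)
  have hB₁ := (hasDerivAt_const (t 0) (μ * μ)).fun_div ((hp.fun_pow 2).const_mul 2) h2p2
  have hB₀ := (hr'.fun_neg.fun_div (hp.const_mul 2) h2p0).fun_add
    ((hr.const_mul μ).fun_div ((hp.fun_pow 2).const_mul 2) h2p2)
  have hchr := fun (s : Pt 2) (hs : s ∈ M) => hg.chr_eq hs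
  have e000 : ∀ s ∈ M, chr g 0 0 0 s
      = 0 * s 1 + (-deriv p (s 0) / p (s 0) + μ / (2 * p (s 0))) := by
    intro s hs
    rw [(hchr s hs).1]
    ring
  have e100 : ∀ s ∈ M, chr g 1 0 0 s = μ * μ / (2 * p (s 0) ^ 2) * s 1
      + (-deriv r (s 0) / (2 * p (s 0)) + μ * r (s 0) / (2 * p (s 0) ^ 2)) := by
    intro s hs
    rw [(hchr s hs).2.2.2.2.1]
    ring
  have e101 : ∀ s ∈ M, chr g 1 0 1 s = 0 * s 1 + -μ / (2 * p (s 0)) := by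
    intro s hs
    rw [(hchr s hs).2.2.2.2.2.1]
    ring
  have e110 : ∀ s ∈ M, chr g 1 1 0 s = 0 * s 1 + -μ / (2 * p (s 0)) := by
    intro s hs
    rw [(hchr s hs).2.2.2.2.2.2.1]
    ring
  have e001 : ∀ s ∈ M, chr g 0 0 1 s = 0 * s 1 + 0 := by
    intro s hs
    rw [(hchr s hs).2.1]
    ring
  have e010 : ∀ s ∈ M, chr g 0 1 0 s = 0 * s 1 + 0 := by
    intro s hs
    rw [(hchr s hs).2.2.1]
    ring
  have e011 : ∀ s ∈ M, chr g 0 1 1 s = 0 * s 1 + 0 := by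
    intro s hs
    rw [(hchr s hs).2.2.2.1]
    ring
  have e111 : ∀ s ∈ M, chr g 1 1 1 s = 0 * s 1 + 0 := by
    intro s hs
    rw [(hchr s hs).2.2.2.2.2.2.2]
    ring
  have hdiff {F : Pt 2 → ℝ} {a b : ℝ → ℝ} {a' b' : ℝ}
      (hF : ∀ s ∈ M, F s = a (s 0) * s 1 + b (s 0))
      (ha : HasDerivAt a a' (t 0)) (hb : HasDerivAt b b' (t 0)) : DifferentiableAt ℝ F t :=
    (hasFDerivAt_affine ha hb).differentiableAt.congr_of_eventuallyEq
      (Filter.eventually_of_mem (hg.isOpen.mem_nhds ht) hF)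
  obtain ⟨h1, h2, h3, h4, h5, h6, h7, h8⟩ := hg.chr_eq ht
  constructor
  · simp only [Fin.forall_fin_two]
    exact ⟨⟨⟨hdiff e000 hz hA, hdiff e001 hz hz⟩, hdiff e010 hz hz, hdiff e011 hz hz⟩,
      ⟨hdiff e100 hB₁ hB₀, hdiff e101 hz hC⟩, hdiff e110 hz hC, hdiff e111 hz hz⟩
  · have d1 := pder_one_affine hg.isOpen ht e000 hz hA
    have d2 := pder_one_affine hg.isOpen ht e100 hB₁ hB₀
    have d3 := pder_zero_affine hg.isOpen ht e101 hz hC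
    have d4 := pder_zero_affine hg.isOpen ht e110 hz hC
    have d5 := pder_one_affine hg.isOpen ht e101 hz hC
    have d6 := pder_zero_affine hg.isOpen ht e001 hz hz
    have d7 := pder_one_affine hg.isOpen ht e001 hz hz
    have d8 := pder_zero_affine hg.isOpen ht e010 hz hz
    have d9 := pder_zero_affine hg.isOpen ht e011 hz hz
    have d10 := pder_zero_affine hg.isOpen ht e111 hz hz
    intro k m i j
    fin_cases k <;> fin_cases m <;> fin_cases i <;> fin_cases j <;>
      simp only [Fin.zero_eta, Fin.mk_one, Fin.isValue, Fin.sum_univ_two, h1, h2, h3, h4, h5, h6,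
        h7, h8, d1, d2, d3, d4, d5, d6, d7, d8, d9, d10] <;>
      field_simp <;> ring

theorem curvF_eq_zero (hg : IsAffineMet M g p μ r) {X Y : VF 2} (hX : SmoothVF M X)
    (hY : SmoothVF M Y) (α : OneForm 2) {t : Pt 2} (ht : t ∈ M) (k : Fin 2) :
    curvF g X Y α t k = 0 := by
  obtain ⟨hd, hflat⟩ := hg.differentiableAt_chr_and_flat ht
  have hcov (W : VF 2) (m : Fin 2) (s : Pt 2) :
      covV g W (fun _ => Pi.single k 1) s m = ∑ i, W s i * chr g m i k s := by
    simp [covV, pder_const, Pi.single_apply]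
  have hsm {W : VF 2} (hW : SmoothVF M W) (j : Fin 2) : DifferentiableAt ℝ (fun s => W s j) t :=
    ((hW j).contDiffAt (hg.isOpen.mem_nhds ht)).differentiableAt (by simp)
  have hder {W : VF 2} (hW : SmoothVF M W) (i m : Fin 2) :
      pder i (fun s => ∑ j, W s j * chr g m j k s) t
        = ∑ j, (pder i (fun s => W s j) t * chr g m j k t + W t j * pder i (chr g m j k) t) := by
    rw [pder_sum _ fun j _ => (hsm hW j).fun_mul (hd m j k)]
    exact Finset.sum_congr rfl fun j _ => pder_mul (hsm hW j) (hd m j k)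
  have hzero (m : Fin 2) : curvV g X Y (fun _ => Pi.single k 1) t m = 0 := by
    have hunfold (W V : VF 2) : covV g W V t m
        = ∑ i, W t i * (pder i (fun s => V s m) t + ∑ l, chr g m i l t * V t l) := rfl
    rw [curvV, hunfold X, hunfold Y, hcov]
    simp only [hcov, hder hX, hder hY, vbr]
    have h01 := hflat k m 0 1
    simp only [Fin.sum_univ_two] at h01 ⊢
    linear_combination (X t 0 * Y t 1 - X t 1 * Y t 0) * h01
  simp [curvF, hzero]

theorem mup_covF (hg : IsAffineMet M g p μ r) (X : VF 2) (α : OneForm 2) {t : Pt 2} (ht : t ∈ M) :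
    mup g (covF g X α) t 0 = p (t 0) * (X t 0 * pder 0 (fun s => α s 1) t
        + X t 1 * pder 1 (fun s => α s 1) t) + μ / 2 * X t 0 * α t 1
    ∧ mup g (covF g X α) t 1 = p (t 0) * (X t 0 * pder 0 (fun s => α s 0) t
          + X t 1 * pder 1 (fun s => α s 0) t)
        + (μ * t 1 + r (t 0)) * (X t 0 * pder 0 (fun s => α s 1) t
          + X t 1 * pder 1 (fun s => α s 1) t)
        + X t 0 * ((deriv p (t 0) - μ / 2) * α t 0 + deriv r (t 0) / 2 * α t 1)
        + μ / 2 * X t 1 * α t 1 := by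
  have hp0 := hg.ne_zero t ht
  obtain ⟨h1, h2, h3, h4, h5, h6, h7, h8⟩ := hg.chr_eq ht
  constructor <;>
    simp only [mup, covF, Fin.sum_univ_two, hg.inv_eq ht, h1, h2, h3, h4, h5, h6, h7, h8,
      Matrix.of_apply, Matrix.cons_val_zero, Matrix.cons_val_one, Matrix.cons_val'] <;>
    field_simp <;> ring

theorem pencil {g' : Met 2} {p' r' : ℝ → ℝ} {μ' : ℝ} (hg : IsAffineMet M g p μ r)
    (hg' : IsAffineMet M g' p' μ' r') {lam : ℝ}
    (hu : ∀ t ∈ M, IsUnit ((g t)⁻¹ + lam • (g' t)⁻¹)) :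
    IsAffineMet M (pencil g g' lam) (fun x => p x + lam * p' x) (μ + lam * μ')
      (fun x => r x + lam * r' x) := by
  have key : ∀ t ∈ M, (g t)⁻¹ + lam • (g' t)⁻¹ = !![0, p (t 0) + lam * p' (t 0);
      p (t 0) + lam * p' (t 0), (μ + lam * μ') * t 1 + (r (t 0) + lam * r' (t 0))] := by
    intro t ht
    rw [hg.inv_eq ht, hg'.inv_eq ht]
    ext i j
    fin_cases i <;> fin_cases j <;> simp
    ring
  refine ⟨hg.isOpen, hg.smooth_p.add (contDiff_const.mul hg'.smooth_p),
    hg.smooth_r.add (contDiff_const.mul hg'.smooth_r), fun t ht => ?_, fun t ht => ?_⟩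
  · have := hu t ht
    rw [key t ht] at this
    exact isUnit_antitriangular.1 this
  · rw [_root_.pencil, key t ht]

theorem compatible {g' : Met 2} {p' r' : ℝ → ℝ} {μ' : ℝ} (hg : IsAffineMet M g p μ r)
    (hg' : IsAffineMet M g' p' μ' r') : Compatible M g g' := by
  refine ⟨fun lam hu X _ α _ t ht k => ?_, fun lam hu X Y hX hY α _ t ht k => ?_⟩
  · have hl := hg.pencil hg' hu
    have hp : deriv (fun x => p x + lam * p' x) (t 0) = deriv p (t 0) + lam * deriv p' (t 0) :=
      ((hg.hasDerivAt_p _).fun_add ((hg'.hasDerivAt_p _).const_mul lam)).deriv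
    have hr : deriv (fun x => r x + lam * r' x) (t 0) = deriv r (t 0) + lam * deriv r' (t 0) :=
      ((hg.hasDerivAt_r _).fun_add ((hg'.hasDerivAt_r _).const_mul lam)).deriv
    obtain ⟨a0, a1⟩ := hl.mup_covF X α ht
    obtain ⟨b0, b1⟩ := hg.mup_covF X α ht
    obtain ⟨c0, c1⟩ := hg'.mup_covF X α ht
    rw [hp, hr] at a1
    fin_cases k
    · simp only [Fin.zero_eta, a0, b0, c0]
      ring
    · simp only [Fin.mk_one, a1, b1, c1]
      ring
  · simp [mup, (hg.pencil hg' hu).curvF_eq_zero hX hY, hg.curvF_eq_zero hX hY,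
      hg'.curvF_eq_zero hX hY, ht]

end IsAffineMet

end AffineMetrics

section Counterexample

variable {M : Set (Pt 2)} {h h' : Met 2} {f : ℝ → ℝ} {E : VF 2} {t : Pt 2}

theorem circM_eq (hh : IsAffineMet M h id 1 0) (hh' : IsAffineMet M h' f 0 f)
    (u v : OneForm 2) (ht : t ∈ M) :
    circM h h' u v t 0 = (1 / 2 - t 0 * deriv f (t 0) / f (t 0)) * u t 1 * v t 0
        + (u t 0 / 2 - t 0 * deriv f (t 0) / (2 * f (t 0)) * u t 1) * v t 1
    ∧ circM h h' u v t 1 = u t 1 * v t 1 / 2 := by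
  have hx : t 0 ≠ 0 := hh.ne_zero t ht
  have hf0 := hh'.ne_zero t ht
  obtain ⟨h1, h2, h3, h4, h5, h6, h7, h8⟩ := hh.chr_eq ht
  obtain ⟨k1, k2, k3, k4, k5, k6, k7, k8⟩ := hh'.chr_eq ht
  have hd : deriv (0 : ℝ → ℝ) (t 0) = 0 := by simp
  constructor <;>
    simp only [circM, mup, covF, Fin.sum_univ_two, hh.inv_eq ht, h1, h2, h3, h4, h5, h6, h7, h8,
      k1, k2, k3, k4, k5, k6, k7, k8, id, deriv_id, hd, Pi.zero_apply,
      Matrix.of_apply, Matrix.cons_val_zero, Matrix.cons_val_one, Matrix.cons_val'] <;>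
    field_simp <;> ring

theorem mdown_euler (hh : IsAffineMet M h id 1 0) (hE : ∀ t i, E t i = t i) (ht : t ∈ M) :
    mdown h E t 0 = 0 ∧ mdown h E t 1 = 1 := by
  have hx : t 0 ≠ 0 := hh.ne_zero t ht
  constructor <;>
    simp [mdown, Fin.sum_univ_two, hh.eq_expl ht, hE] <;> field_simp <;> ring

theorem Tmat_eq (hh : IsAffineMet M h id 1 0) (hh' : IsAffineMet M h' f 0 f)
    (hE : ∀ t i, E t i = t i) (ht : t ∈ M) :
    Tmat h h' E t = !![1 / 2 - t 0 * deriv f (t 0) / f (t 0),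
      -(t 0 * deriv f (t 0) / (2 * f (t 0))); 0, 1 / 2] := by
  obtain ⟨e0, e1⟩ := mdown_euler hh hE ht
  ext i j
  fin_cases i <;> fin_cases j <;>
    simp [Tmat, (circM_eq hh hh' _ _ ht).1, (circM_eq hh hh' _ _ ht).2, e0, e1]

theorem isUnit_Tmat (hh : IsAffineMet M h id 1 0) (hh' : IsAffineMet M h' f 0 f)
    (hE : ∀ t i, E t i = t i) (ht : t ∈ M) (hne : t 0 * deriv f (t 0) / f (t 0) ≠ 1 / 2) :
    IsUnit (Tmat h h' E t) := by
  rw [Tmat_eq hh hh' hE ht, Matrix.isUnit_iff_isUnit_det, Matrix.det_fin_two_of, isUnit_iff_ne_zero]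
  have := sub_ne_zero.2 hne.symm
  simpa using this

theorem bulF_eq (hh : IsAffineMet M h id 1 0) (hh' : IsAffineMet M h' f 0 f)
    (hE : ∀ t i, E t i = t i) (ht : t ∈ M) (hne : t 0 * deriv f (t 0) / f (t 0) ≠ 1 / 2)
    (u v : OneForm 2) :
    bulF h h' E u v t 0 = u t 0 * v t 1 + u t 1 * v t 0 ∧ bulF h h' E u v t 1 = u t 1 * v t 1 := by
  have hu : (Tmat h h' E t).det ≠ 0 :=
    isUnit_iff_ne_zero.1 ((Matrix.isUnit_iff_isUnit_det _).1 (isUnit_Tmat hh hh' hE ht hne))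
  have hT : (Tmat h h' E t).mulVec (TinvF h h' E v t) = v t := by
    have : TinvF h h' E v t = (Tmat h h' E t)⁻¹.mulVec (v t) := rfl
    rw [this, Matrix.mulVec_mulVec, Matrix.mul_nonsing_inv _ (isUnit_iff_ne_zero.2 hu),
      Matrix.one_mulVec]
  rw [Tmat_eq hh hh' hE ht] at hT
  have h0 := congrFun hT 0
  have h1 := congrFun hT 1
  simp only [Matrix.mulVec, dotProduct, Fin.sum_univ_two, Matrix.of_apply, Matrix.cons_val_zero,
    Matrix.cons_val_one, Matrix.cons_val'] at h0 h1
  obtain ⟨c0, c1⟩ := circM_eq hh hh' u (TinvF h h' E v) ht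
  rw [bulF, c0, c1]
  constructor
  · linear_combination u t 1 * h0 + u t 0 * h1
  · linear_combination u t 1 * h1

/-- The components of `f · •` on tangent vectors. -/
def bulCoeff (k i j : Fin 2) : ℝ :=
  if i = 0 ∧ j = 0 then (if k = 0 then 1 else -1)
  else if k = 1 ∧ (i = 0 ∨ j = 0) then 1 else 0

theorem bulMul_eq (hh : IsAffineMet M h id 1 0) (hh' : IsAffineMet M h' f 0 f)
    (hE : ∀ t i, E t i = t i) (ht : t ∈ M) (hne : t 0 * deriv f (t 0) / f (t 0) ≠ 1 / 2)
    (k i j : Fin 2) : bulMul h h' E t k i j = bulCoeff k i j * (f (t 0))⁻¹ := by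
  have hf0 := hh'.ne_zero t ht
  fin_cases k <;> fin_cases i <;> fin_cases j <;>
    simp only [bulMul, bulV, mup, hh'.inv_eq ht, Fin.sum_univ_two,
      (bulF_eq hh hh' hE ht hne _ _).1, (bulF_eq hh hh' hE ht hne _ _).2] <;>
    simp [mdown, hh'.eq_expl ht, bulCoeff] <;>
    field_simp <;> ring

theorem lieMul_bulMul (hh : IsAffineMet M h id 1 0) (hh' : IsAffineMet M h' f 0 f)
    (hE : ∀ t i, E t i = t i) (hne : ∀ t ∈ M, t 0 * deriv f (t 0) / f (t 0) ≠ 1 / 2)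
    (ht : t ∈ M) (k i j : Fin 2) :
    lieMul E (bulMul h h' E) t k i j
      = (1 - t 0 * deriv f (t 0) / f (t 0)) * bulMul h h' E t k i j := by
  have hf0 := hh'.ne_zero t ht
  have hb (k i j : Fin 2) : ∀ s ∈ M,
      bulMul h h' E s k i j = 0 * s 1 + bulCoeff k i j * (f (s 0))⁻¹ := by
    intro s hs
    rw [bulMul_eq hh hh' hE hs (hne s hs)]
    ring
  have hc := (hh'.hasDerivAt_p (t 0)).fun_inv hf0
  have hz := hasDerivAt_const (t 0) (0 : ℝ)
  have hm (k i j : Fin 2) (s : Pt 2) :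
      mapp (bulMul h h' E) (fun _ => Pi.single i 1) (fun _ => Pi.single j 1) s k
        = bulMul h h' E s k i j := by
    simp [mapp, Pi.single_apply]
  have hbr (i k : Fin 2) : vbr E (fun _ => Pi.single i 1) t k = -(if k = i then 1 else 0) := by
    simp [vbr, hE, pder_const, pder_coord, Pi.single_apply]
  have d0 := fun k i j =>
    pder_zero_affine hh.isOpen ht (hb k i j) hz (hc.const_mul (bulCoeff k i j))
  have d1 := fun k i j =>
    pder_one_affine hh.isOpen ht (hb k i j) hz (hc.const_mul (bulCoeff k i j))
  have hL : lieMul E (bulMul h h' E) t k i j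
      = t 0 * pder 0 (fun s => bulMul h h' E s k i j) t
        + t 1 * pder 1 (fun s => bulMul h h' E s k i j) t + bulMul h h' E t k i j := by
    rw [lieMul, vbr]
    simp only [hm, hE, pder_coord]
    simp [mapp, hbr, Fin.sum_univ_two]
    fin_cases k <;> fin_cases i <;> fin_cases j <;> simp
  rw [hL, d0, d1, bulMul_eq hh hh' hE ht (hne t ht)]
  field_simp
  ring

end Counterexample

/-- The two-dimensional counterexample: for the pair of metrics with
inverses h⁻¹ = [[0,x],[x,y]], h̃⁻¹ = [[0,f],[f,f]] and E = x∂ₓ + y∂_y, the pair is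
compatible and regular, L_E h = h, L_E h̃ = (2 − xf'/f) h̃, the multiplication • is
dx•dx = 0, dx•dy = dx, dy•dy = dy, and L_E(•) = (1 − xf'/f)·• although
D̃ − D = 1 − xf'/f is non-constant. -/
theorem stmt16 (f : ℝ → ℝ) (hf : ContDiff ℝ (⊤ : ℕ∞) f) (hf0 : ∀ x, f x ≠ 0)
    (hfnc : ¬ ∃ c₀ : ℝ, ∀ x : ℝ, x * deriv f x / f x = c₀)
    (M : Set (Pt 2)) (hMopen : IsOpen M) (hMconn : IsConnected M)
    (hMsub : ∀ t ∈ M, t 0 * deriv f (t 0) / f (t 0) ≠ 1 / 2 ∧ t 0 ≠ 0)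
    (hMnc : ¬ ∃ c₀ : ℝ, ∀ t ∈ M, t 0 * deriv f (t 0) / f (t 0) = c₀)
    (h h' : Met 2)
    (hhdef : ∀ t : Pt 2, h t = (!![0, t 0; t 0, t 1])⁻¹)
    (hh'def : ∀ t : Pt 2, h' t = (!![0, f (t 0); f (t 0), f (t 0)])⁻¹)
    (E : VF 2) (hEdef : ∀ t i, E t i = t i) :
    (IsMetricOn M h ∧ IsMetricOn M h' ∧ Compatible M h h' ∧ RegularTriple M h h' E)
    ∧ ((∀ t ∈ M, ∀ i j, lieMet E h t i j = h t i j)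
        ∧ (∀ t ∈ M, ∀ i j,
            lieMet E h' t i j = (2 - t 0 * deriv f (t 0) / f (t 0)) * h' t i j))
    ∧ (∀ t ∈ M, ∀ a : Fin 2,
        bulF h h' E (fun _ => Pi.single (0 : Fin 2) (1 : ℝ)) (fun _ => Pi.single (0 : Fin 2) (1 : ℝ)) t a = 0
        ∧ bulF h h' E (fun _ => Pi.single (0 : Fin 2) (1 : ℝ)) (fun _ => Pi.single (1 : Fin 2) (1 : ℝ)) t a
            = (Pi.single (0 : Fin 2) (1 : ℝ) : Fin 2 → ℝ) a
        ∧ bulF h h' E (fun _ => Pi.single (1 : Fin 2) (1 : ℝ)) (fun _ => Pi.single (1 : Fin 2) (1 : ℝ)) t a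
            = (Pi.single (1 : Fin 2) (1 : ℝ) : Fin 2 → ℝ) a)
    ∧ (∀ t ∈ M, ∀ a i j,
        lieMul E (bulMul h h' E) t a i j
          = (1 - t 0 * deriv f (t 0) / f (t 0)) * bulMul h h' E t a i j) := by
  have hne : ∀ t ∈ M, t 0 * deriv f (t 0) / f (t 0) ≠ 1 / 2 := fun t ht => (hMsub t ht).1
  have hh : IsAffineMet M h id 1 0 :=
    ⟨hMopen, contDiff_id, contDiff_const, fun t ht => (hMsub t ht).2,
      fun t _ => by simp [hhdef]⟩
  have hh' : IsAffineMet M h' f 0 f :=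
    ⟨hMopen, hf, hf, fun t _ => hf0 (t 0), fun t _ => by simp [hh'def]⟩
  refine ⟨⟨hh.isMetricOn, hh'.isMetricOn, hh.compatible hh',
    fun t ht => isUnit_Tmat hh hh' hEdef ht (hne t ht)⟩, ⟨fun t ht i j => ?_, fun t ht i j => ?_⟩,
    fun t ht a => ?_, fun t ht a i j => lieMul_bulMul hh hh' hEdef hne ht a i j⟩
  · have hx : t 0 ≠ 0 := (hMsub t ht).2
    obtain ⟨h1, h2, h3, h4, h5, h6, h7, h8⟩ := hh.pder_entry ht
    fin_cases i <;> fin_cases j <;>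
      simp [lieMet, hEdef, pder_coord, Fin.sum_univ_two, h1, h2, h3, h4, h5, h6, h7, h8,
        hh.eq_expl ht] <;>
      field_simp <;> ring
  · have hx : f (t 0) ≠ 0 := hf0 _
    obtain ⟨h1, h2, h3, h4, h5, h6, h7, h8⟩ := hh'.pder_entry ht
    fin_cases i <;> fin_cases j <;>
      simp [lieMet, hEdef, pder_coord, Fin.sum_univ_two, h1, h2, h3, h4, h5, h6, h7, h8,
        hh'.eq_expl ht] <;>
      field_simp <;> ring
  · fin_cases a <;>
      simp [(bulF_eq hh hh' hEdef ht (hne t ht) _ _).1, (bulF_eq hh hh' hEdef ht (hne t ht) _ _).2]
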